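/- Let k be a field of characteristic 0 and A a k-k-biring. Let P = {x ∈ A : Δ⁺(x) = x ⊗ 1 + 1 ⊗ x} be the k-submodule of primitive elements of A. Then the canonical k-algebra homomorphism from the symmetric algebra Sym_k(P) to A extending the inclusion P ↪ A is bijective; in particular A is a polynomial algebra on any k-basis of P. (This is the underlying-algebra content of Theorem 4.5 of the paper: every plethory over a field of characteristic zero is linear, i.e., isomorphic to the free plethory Sym(Prim(Q)) on its bialgebra of primitives.) -/

import Mathlib

/- A `k`-biring: a commutative `k`-algebra `A` with coaddition, additive counit, antipode,
comultiplication and multiplicative counit, such that for every commutative `k`-algebra `R`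
the induced operations make `Hom_{k-alg}(A, R)` a commutative unital ring (equivalently, the
diagrammatic coring/codistributivity axioms hold). -/

open scoped TensorProduct

/-- The binary operation on `k`-algebra homomorphisms `A →ₐ[k] R` induced by a
comultiplication-type map `Δ : A →ₐ[k] A ⊗[k] A`: `(f, g) ↦ mult ∘ (f ⊗ g) ∘ Δ`. -/
noncomputable def ptOp (k A : Type) [Field k] [CommRing A] [Algebra k A]
    (Δ : A →ₐ[k] A ⊗[k] A) {R : Type} [CommRing R] [Algebra k R]
    (f g : A →ₐ[k] R) : A →ₐ[k] R :=
  (Algebra.TensorProduct.lmul' k (S := R)).comp ((Algebra.TensorProduct.map f g).comp Δ)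

/-- The constant point induced by a counit-type map `ε : A →ₐ[k] k`. -/
noncomputable def ptConst (k A : Type) [Field k] [CommRing A] [Algebra k A]
    (ε : A →ₐ[k] k) {R : Type} [CommRing R] [Algebra k R] : A →ₐ[k] R :=
  (Algebra.ofId k R).comp ε

/-- A `k`-biring structure on the commutative `k`-algebra `A`; equivalently, the structure of
an affine ring scheme on `Spec A` over `k`. -/
structure Biring (k A : Type) [Field k] [CommRing A] [Algebra k A] where
  coadd : A →ₐ[k] A ⊗[k] A
  counitAdd : A →ₐ[k] k
  antipode : A →ₐ[k] A
  comul : A →ₐ[k] A ⊗[k] A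
  counitMul : A →ₐ[k] k
  pt_add_assoc : ∀ (R : Type) [CommRing R] [Algebra k R] (f g h : A →ₐ[k] R),
    ptOp k A coadd (ptOp k A coadd f g) h = ptOp k A coadd f (ptOp k A coadd g h)
  pt_add_comm : ∀ (R : Type) [CommRing R] [Algebra k R] (f g : A →ₐ[k] R),
    ptOp k A coadd f g = ptOp k A coadd g f
  pt_zero_add : ∀ (R : Type) [CommRing R] [Algebra k R] (f : A →ₐ[k] R),
    ptOp k A coadd (ptConst k A counitAdd) f = f
  pt_add_neg : ∀ (R : Type) [CommRing R] [Algebra k R] (f : A →ₐ[k] R),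
    ptOp k A coadd f (f.comp antipode) = ptConst k A counitAdd
  pt_mul_assoc : ∀ (R : Type) [CommRing R] [Algebra k R] (f g h : A →ₐ[k] R),
    ptOp k A comul (ptOp k A comul f g) h = ptOp k A comul f (ptOp k A comul g h)
  pt_mul_comm : ∀ (R : Type) [CommRing R] [Algebra k R] (f g : A →ₐ[k] R),
    ptOp k A comul f g = ptOp k A comul g f
  pt_one_mul : ∀ (R : Type) [CommRing R] [Algebra k R] (f : A →ₐ[k] R),
    ptOp k A comul (ptConst k A counitMul) f = f
  pt_mul_add : ∀ (R : Type) [CommRing R] [Algebra k R] (f g h : A →ₐ[k] R),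
    ptOp k A comul f (ptOp k A coadd g h)
      = ptOp k A coadd (ptOp k A comul f g) (ptOp k A comul f h)

/-- A `k`-`k`-biring: a `k`-biring `A` together with a map `β` from `k` to the set of
`k`-algebra homomorphisms `A → k` such that `β 0 = ε⁺`, `β 1 = ε×`,
`β (c + c') = (β c ⊗ β c') ∘ Δ⁺` and `β (c * c') = (β c ⊗ β c') ∘ Δ×`; equivalently, an
affine `k`-algebra scheme over `k`. -/
structure Bibiring (k A : Type) [Field k] [CommRing A] [Algebra k A]
    extends Biring k A where
  beta : k → (A →ₐ[k] k)
  beta_zero : beta 0 = counitAdd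
  beta_one : beta 1 = counitMul
  beta_add : ∀ c c' : k, beta (c + c') = ptOp k A coadd (beta c) (beta c')
  beta_mul : ∀ c c' : k, beta (c * c') = ptOp k A comul (beta c) (beta c')

/-- The `k`-submodule of primitive elements `{x ∈ A : Δ⁺(x) = x ⊗ 1 + 1 ⊗ x}` of a
`k`-biring `A`. -/
noncomputable def primitives (k A : Type) [Field k] [CommRing A] [Algebra k A]
    (B : Biring k A) : Submodule k A where
  carrier := {x : A | B.coadd x = x ⊗ₜ[k] (1 : A) + (1 : A) ⊗ₜ[k] x}
  add_mem' := by
    intro a b ha hb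
    simp only [Set.mem_setOf_eq, map_add] at *
    rw [ha, hb, TensorProduct.add_tmul, TensorProduct.tmul_add]
    abel
  zero_mem' := by
    simp only [Set.mem_setOf_eq, map_zero, TensorProduct.zero_tmul,
      TensorProduct.tmul_zero, add_zero]
  smul_mem' := by
    intro c x hx
    simp only [Set.mem_setOf_eq, map_smul] at *
    rw [hx, smul_add, TensorProduct.smul_tmul', TensorProduct.tmul_smul]

/-!
For a commutative cocommutative bialgebra `A` over a field of characteristic zero, let `[n]` be the
`n`-th convolution power of the identity. Suppose that `n ↦ [n] a` is a polynomial in `n` for every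
`a`, and let `log a` be its linear coefficient. Comparing coefficients in
`Δ ([n] a) = ([n] ⊗ [n]) (Δ a)` shows that `log a` is primitive, and differentiating
`[m + n] = [m] * [n]` expresses the other coefficients of positive degree through products of values
of `log`; as the constant coefficient is a scalar and `[1] a = a`, the primitives generate `A`.
Composing `log` with the coordinates of a basis of the primitives gives point derivations at the
counit, and the corresponding left-invariant derivations are dual to the basis, so the basis is
algebraically independent.

Polynomiality comes from the multiplication of the ring scheme. There `[n]` is multiplication by the
constant point `β n`, so it suffices that `q ↦ β q c` is polynomial on natural numbers for each
`c : A`. Expanding `β (s * q + t) c` by `Δ⁺` and `Δ×` shows that the affine substitutes of this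
function span a finite-dimensional space. On it the translation by `1` is conjugate to all its
positive powers, through dilations. Its finite set of eigenvalues is therefore stable under powers,
so they are roots of unity; being conjugate to one of its powers which is unipotent, the translation
is unipotent, and the orbit of a vector under a unipotent operator is polynomial.
-/

section Unipotence

open Polynomial

variable {k : Type*} [Field k]

theorem dvd_pow_natDegree_of_forall_aeval_eq_zero (K : Type*) [Field K] [IsAlgClosed K]
    [Algebra k K] {p q : k[X]} (hp : p ≠ 0) (h : ∀ x : K, aeval x p = 0 → aeval x q = 0) :
    p ∣ q ^ p.natDegree := by
  have hsplits : (p.map (algebraMap k K)).Splits := IsAlgClosed.splits _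
  rw [← map_dvd_map' (algebraMap k K), Polynomial.map_pow, hsplits.eq_prod_roots]
  have hroot : ∀ x ∈ (p.map (algebraMap k K)).roots, X - C x ∣ q.map (algebraMap k K) := by
    intro x hx
    rw [dvd_iff_isRoot, IsRoot, eval_map_algebraMap]
    exact h x (mem_aroots.mp hx).2
  have hunit : IsUnit (C (p.map (algebraMap k K)).leadingCoeff) :=
    isUnit_C.mpr (by simpa using hp)
  rw [hunit.mul_left_dvd]
  simpa [← hsplits.natDegree_eq_card_roots] using Multiset.prod_dvd_prod_of_dvd _ _ hroot

theorem exists_pow_eq_pow_of_finite {M : Type*} [Monoid M] {Z : Set M}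
    (hZ : Z.Finite) (hpow : ∀ x ∈ Z, ∀ n : ℕ, x ^ (n + 1) ∈ Z) :
    ∃ a c : ℕ, ∀ x ∈ Z, x ^ (a + 1 + (c + 1)) = x ^ (a + 1) := by
  have := hZ.to_subtype
  let power (n : ℕ) (x : Z) : Z := ⟨x ^ (n + 1), hpow x x.2 n⟩
  obtain ⟨a, b, hab, heq⟩ : ∃ a b, a < b ∧ power a = power b := by
    obtain ⟨a, b, hab, heq⟩ := Finite.exists_ne_map_eq_of_infinite power
    exact hab.lt_or_gt.elim (fun h ↦ ⟨a, b, h, heq⟩) fun h ↦ ⟨b, a, h, heq.symm⟩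
  obtain ⟨c, rfl⟩ := Nat.exists_eq_add_of_lt hab
  refine ⟨a, c, fun x hx ↦ ?_⟩
  have hpow_eq : x ^ (a + 1) = x ^ (a + c + 1 + 1) :=
    congrArg Subtype.val (congrFun heq ⟨x, hx⟩)
  rw [hpow_eq]
  ring_nf

variable {R : Type*} [Ring R] [Algebra k R] {T : R}

theorem exists_algEquiv_apply_eq_of_isConj {x y : R} (hxy : IsConj x y) :
    ∃ σ : R ≃ₐ[k] R, σ x = y := by
  obtain ⟨u, hu⟩ := hxy
  refine ⟨MulSemiringAction.toAlgEquiv k R (ConjAct.toConjAct u), ?_⟩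
  rw [MulSemiringAction.toAlgEquiv_apply, ConjAct.units_smul_def, ConjAct.ofConjAct_toConjAct,
    hu.eq, u.mul_inv_cancel_right]

theorem aeval_pow_minpoly_eq_zero_of_isConj {n : ℕ} (hconj : IsConj T (T ^ n))
    {K : Type*} [Field K] [Algebra k K] {x : K} (hx : aeval x (minpoly k T) = 0) :
    aeval (x ^ n) (minpoly k T) = 0 := by
  obtain ⟨σ, hσ⟩ := exists_algEquiv_apply_eq_of_isConj (k := k) hconj
  have hdvd : minpoly k T ∣ expand k n (minpoly k T) := by
    refine minpoly.dvd k T ?_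
    rw [expand_aeval, ← hσ, aeval_algEquiv, AlgHom.comp_apply, minpoly.aeval, map_zero]
  simpa only [expand_aeval] using aeval_eq_zero_of_dvd_aeval_eq_zero hdvd hx

theorem isNilpotent_sub_one_of_isConj_pow (hint : IsIntegral k T) (hunit : IsUnit T)
    (hconj : ∀ n : ℕ, IsConj T (T ^ (n + 1))) : IsNilpotent (T - 1) := by
  let K := AlgebraicClosure k
  have hμ : minpoly k T ≠ 0 := minpoly.ne_zero hint
  obtain ⟨a, c, hroots⟩ := exists_pow_eq_pow_of_finite ((minpoly k T).rootSet_finite K)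
    fun x hx n ↦ (mem_rootSet_of_ne hμ).mpr <|
      aeval_pow_minpoly_eq_zero_of_isConj (hconj n) ((mem_rootSet_of_ne hμ).mp hx)
  have hdvd : minpoly k T ∣ (X ^ (a + 1) * (X ^ (c + 1) - 1)) ^ (minpoly k T).natDegree := by
    refine dvd_pow_natDegree_of_forall_aeval_eq_zero K hμ fun x hx ↦ ?_
    simp [mul_sub, ← pow_add, hroots x ((mem_rootSet_of_ne hμ).mpr hx)]
  have hpow : IsNilpotent (T ^ (a + 1) * (T ^ (c + 1) - 1)) :=
    ⟨_, by simpa using aeval_eq_zero_of_dvd_aeval_eq_zero hdvd (minpoly.aeval k T)⟩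
  have hcomm : Commute (T ^ (c + 1) - 1) (T ^ (a + 1)) :=
    ((Commute.refl T).pow_pow _ _).sub_left (Commute.one_left _)
  rw [← hcomm.eq, (hunit.pow _).isNilpotent_mul_unit_of_commute_iff hcomm] at hpow
  obtain ⟨σ, hσ⟩ := exists_algEquiv_apply_eq_of_isConj (k := k) (hconj c)
  simpa [← hσ] using hpow.map σ.symm

end Unipotence

section PolynomialFunctions

open Polynomial

theorem pow_eq_sum_choose_nsmul_of_pow_sub_one_eq_zero {R : Type*} [Ring R] {u : R} {d : ℕ}
    (hd : (u - 1) ^ d = 0) (n : ℕ) :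
    u ^ n = ∑ j ∈ Finset.range d, n.choose j • (u - 1) ^ j := by
  have hbinom : u ^ n = ∑ j ∈ Finset.range (n + 1), n.choose j • (u - 1) ^ j := by
    have := (Commute.one_right (u - 1)).add_pow n
    simpa [nsmul_eq_mul, Nat.cast_comm] using this
  rw [hbinom]
  trans ∑ j ∈ Finset.range (max (n + 1) d), n.choose j • (u - 1) ^ j
  · refine (Finset.eventually_constant_sum (fun j hj ↦ ?_) (le_max_left _ _)).symm
    rw [Nat.choose_eq_zero_of_lt hj, zero_smul]
  · refine Finset.eventually_constant_sum (fun j hj ↦ ?_) (le_max_right _ _)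
    rw [pow_eq_zero_of_le hj hd, smul_zero]

variable {k : Type*} [Field k]

theorem exists_polynomial_eval_natCast_eq_apply_pow [CharZero k] {R : Type*} [Ring R]
    [Algebra k R] {u : R} (hu : IsNilpotent (u - 1)) (l : R →ₗ[k] k) :
    ∃ p : k[X], ∀ n : ℕ, p.eval (n : k) = l (u ^ n) := by
  obtain ⟨d, hd⟩ := hu
  refine ⟨∑ j ∈ Finset.range d, C (l ((u - 1) ^ j) / j.factorial) * descPochhammer k j,
    fun n ↦ ?_⟩
  rw [pow_eq_sum_choose_nsmul_of_pow_sub_one_eq_zero hd, map_sum, eval_finsetSum]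
  refine Finset.sum_congr rfl fun j _ ↦ ?_
  have hj : (j.factorial : k) ≠ 0 := mod_cast j.factorial_ne_zero
  rw [eval_mul, eval_C, descPochhammer_eval_eq_descFactorial,
    Nat.descFactorial_eq_factorial_mul_choose, map_nsmul, nsmul_eq_mul, Nat.cast_mul]
  field_simp

section AffineSubstitution

variable {V : Submodule k (ℚ → k)} (hV : ∀ f ∈ V, ∀ s t : ℚ, (fun q ↦ f (s * q + t)) ∈ V)

/-- Substitution of `s * q + t` for the variable `q`, as an endomorphism of a space `V` of
functions on `ℚ` that is stable under such substitutions. -/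
def affineSubst (s t : ℚ) : Module.End k V :=
  (LinearMap.funLeft k k fun q ↦ s * q + t).restrict fun f hf ↦ hV f hf s t

theorem affineSubst_apply (s t : ℚ) (f : V) (q : ℚ) :
    (affineSubst hV s t f : ℚ → k) q = (f : ℚ → k) (s * q + t) :=
  rfl

theorem affineSubst_mul (s t s' t' : ℚ) :
    affineSubst hV s t * affineSubst hV s' t' = affineSubst hV (s' * s) (s' * t + t') := by
  ext f q
  simp only [Module.End.mul_apply, affineSubst_apply, mul_add, mul_assoc, add_assoc]

theorem affineSubst_one_zero : affineSubst hV 1 0 = 1 := by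
  ext f q
  simp [affineSubst_apply]

theorem affineSubst_one_one_pow (n : ℕ) : affineSubst hV 1 1 ^ n = affineSubst hV 1 n := by
  induction n with
  | zero => simp [affineSubst_one_zero]
  | succ n ih => rw [pow_succ, ih, affineSubst_mul]; simp

/-- The substitution of `s * q` for `q`, where `s ≠ 0`, as a unit. -/
def scaleUnit {s : ℚ} (hs : s ≠ 0) : (Module.End k V)ˣ where
  val := affineSubst hV s 0
  inv := affineSubst hV s⁻¹ 0
  val_inv := by simp [affineSubst_mul, affineSubst_one_zero, hs]
  inv_val := by simp [affineSubst_mul, affineSubst_one_zero, hs]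

theorem isConj_affineSubst_one_one_pow (n : ℕ) :
    IsConj (affineSubst hV 1 1) (affineSubst hV 1 1 ^ (n + 1)) := by
  have hn : ((n + 1 : ℕ) : ℚ) ≠ 0 := mod_cast n.succ_ne_zero
  refine ⟨scaleUnit hV (inv_ne_zero hn), ?_⟩
  rw [affineSubst_one_one_pow]
  simp [SemiconjBy, scaleUnit, affineSubst_mul, inv_mul_cancel₀ (n.cast_add_one_ne_zero (R := ℚ))]

theorem isUnit_affineSubst_one (t : ℚ) : IsUnit (affineSubst hV 1 t) := by
  refine ⟨⟨affineSubst hV 1 t, affineSubst hV 1 (-t), ?_, ?_⟩, rfl⟩ <;>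
  simp [affineSubst_mul, affineSubst_one_zero]

theorem exists_polynomial_eval_natCast_eq_of_mem [CharZero k] [FiniteDimensional k V]
    (hV : ∀ f ∈ V, ∀ s t : ℚ, (fun q ↦ f (s * q + t)) ∈ V) {f : ℚ → k} (hf : f ∈ V) :
    ∃ p : k[X], ∀ n : ℕ, p.eval (n : k) = f n := by
  have hnil : IsNilpotent (affineSubst hV 1 1 - 1) :=
    isNilpotent_sub_one_of_isConj_pow (k := k) (R := Module.End k V)
      (Algebra.IsIntegral.isIntegral _) (isUnit_affineSubst_one hV 1)
      (isConj_affineSubst_one_one_pow hV)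
  let evalZero : Module.End k V →ₗ[k] k :=
    LinearMap.proj 0 ∘ₗ V.subtype ∘ₗ LinearMap.applyₗ ⟨f, hf⟩
  obtain ⟨p, hp⟩ := exists_polynomial_eval_natCast_eq_apply_pow (k := k) (R := Module.End k V)
    hnil evalZero
  refine ⟨p, fun n ↦ ?_⟩
  simp [hp, evalZero, affineSubst_one_one_pow, affineSubst_apply]

end AffineSubstitution

theorem exists_polynomial_eval_natCast_eq_of_affine_comp_mem [CharZero k] {V : Submodule k (ℚ → k)}
    [FiniteDimensional k V] {f : ℚ → k} (hf : ∀ s t : ℚ, (fun q ↦ f (s * q + t)) ∈ V) :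
    ∃ p : k[X], ∀ n : ℕ, p.eval (n : k) = f n := by
  let orbit : Set (ℚ → k) := Set.range fun (st : ℚ × ℚ) q ↦ f (st.1 * q + st.2)
  have hspan : Submodule.span k orbit ≤ V := by
    rw [Submodule.span_le]
    rintro _ ⟨⟨s, t⟩, rfl⟩
    exact hf s t
  have : FiniteDimensional k (Submodule.span k orbit) := Submodule.finiteDimensional_of_le hspan
  refine exists_polynomial_eval_natCast_eq_of_mem (V := Submodule.span k orbit)
    (fun g hg s t ↦ ?_) (Submodule.subset_span ⟨(1, 0), by simp⟩)
  induction hg using Submodule.span_induction with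
  | mem g hg =>
    obtain ⟨⟨s', t'⟩, rfl⟩ := hg
    refine Submodule.subset_span ⟨(s' * s, s' * t + t'), ?_⟩
    simp only [mul_add, mul_assoc, add_assoc]
  | zero => exact zero_mem _
  | add g h _ _ hg hh => exact add_mem hg hh
  | smul c g _ hg => exact Submodule.smul_mem _ c hg

theorem polynomial_eq_of_forall_eval_natCast_eq (k : Type*) [Field k] [CharZero k]
    {R : Type*} [CommRing R] [Algebra k R] {p q : R[X]}
    (h : ∀ n : ℕ, p.eval (n : R) = q.eval (n : R)) : p = q := by
  nontriviality R
  rw [← sub_eq_zero]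
  by_contra hne
  let r : R[X] := ∏ n ∈ Finset.range ((p - q).natDegree + 1), (X - C (n : R))
  have hr : r.Monic := monic_prod_X_sub_C _ _
  have hdvd : r ∣ p - q := by
    refine Finset.prod_dvd_of_coprime (fun m _ n _ hmn ↦ ?_) fun n _ ↦ ?_
    · refine isCoprime_X_sub_C_of_isUnit_sub ?_
      have hunit : IsUnit ((m : k) - n) := (sub_ne_zero.mpr (mod_cast hmn)).isUnit
      simpa using hunit.map (algebraMap k R)
    · rw [dvd_iff_isRoot, IsRoot, eval_sub, h, sub_self]
  refine hr.not_dvd_of_natDegree_lt hne ?_ hdvd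
  rw [natDegree_prod_of_monic _ _ fun n _ ↦ monic_X_sub_C _]
  simp only [natDegree_X_sub_C, Finset.sum_const, Finset.card_range, smul_eq_mul, mul_one,
    Nat.lt_succ_self]

theorem exists_algHom_eval_natCast_eq {k A R : Type*} [Field k] [CharZero k] [CommRing A]
    [Algebra k A] [CommRing R] [Algebra k R] (f : ℕ → A →ₐ[k] R)
    (hf : ∀ a, ∃ p : R[X], ∀ n : ℕ, p.eval (n : R) = f n a) :
    ∃ Φ : A →ₐ[k] R[X], ∀ a (n : ℕ), (Φ a).eval (n : R) = f n a := by
  choose Φ hΦ using hf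
  have hΦ_eq {a : A} {p : R[X]} (h : ∀ n : ℕ, f n a = p.eval (n : R)) : Φ a = p :=
    polynomial_eq_of_forall_eval_natCast_eq k fun n ↦ (hΦ a n).trans (h n)
  exact ⟨{
    toFun := Φ
    map_one' := hΦ_eq (by simp)
    map_mul' := fun a b ↦ hΦ_eq (by simp [hΦ])
    map_zero' := hΦ_eq (by simp)
    map_add' := fun a b ↦ hΦ_eq (by simp [hΦ])
    commutes' := fun c ↦ hΦ_eq (by simp [Polynomial.algebraMap_apply]) }, hΦ⟩

end PolynomialFunctions

section DualDerivations

open MvPolynomial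

variable {k A σ : Type*} [CommRing k]

theorem eq_C_of_forall_pderiv_eq_zero [IsDomain k] [CharZero k] {F : MvPolynomial σ k}
    (hF : ∀ i, pderiv i F = 0) : F = C (coeff 0 F) := by
  classical
  ext m
  rcases eq_or_ne m 0 with rfl | hm
  · simp
  obtain ⟨i, hi⟩ := Finsupp.support_nonempty_iff.mpr hm
  have hle : Finsupp.single i 1 ≤ m := by
    simpa [Nat.one_le_iff_ne_zero] using hi
  have hcoeff := coeff_pderiv F (i := i) (m - Finsupp.single i 1)
  rw [hF, coeff_zero, tsub_add_cancel_of_le hle, eq_comm, mul_eq_zero] at hcoeff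
  rw [hcoeff.resolve_right (Nat.cast_add_one_ne_zero _), coeff_C, if_neg hm.symm]

variable [CommRing A] [Algebra k A]

theorem derivation_aeval_eq_aeval_pderiv [DecidableEq σ] {x : σ → A} {i : σ}
    {D : Derivation k A A} (hD : ∀ j, D (x j) = if j = i then 1 else 0) (F : MvPolynomial σ k) :
    D (aeval x F) = aeval x (pderiv i F) := by
  induction F using MvPolynomial.induction_on with
  | C c => simp
  | add F G hF hG => simp only [map_add, hF, hG]
  | mul_X F j hF =>
    rw [map_mul, D.leibniz, hF, aeval_X, hD, pderiv_mul, pderiv_X, smul_eq_mul, smul_eq_mul]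
    rcases eq_or_ne j i with rfl | hji
    · simp only [if_pos, Pi.single_eq_same, mul_one, map_add, map_mul, aeval_X]
      ring
    · simp [hji, mul_comm]

theorem algebraicIndependent_of_dual_derivations [DecidableEq σ] [IsDomain k] [CharZero k]
    (hinj : Function.Injective (algebraMap k A)) (x : σ → A) (D : σ → Derivation k A A)
    (hD : ∀ i j, D i (x j) = if j = i then 1 else 0) : AlgebraicIndependent k x := by
  suffices hdeg : ∀ (n : ℕ) (F : MvPolynomial σ k), aeval x F = 0 →
      (∀ m : σ →₀ ℕ, n ≤ m.degree → coeff m F = 0) → F = 0 by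
    rw [algebraicIndependent_iff]
    exact fun F hF ↦ hdeg (F.totalDegree + 1) F hF fun m hm ↦ coeff_eq_zero_of_totalDegree_lt hm
  intro n
  induction n with
  | zero => exact fun F _ hcoeff ↦ MvPolynomial.ext _ _ fun m ↦ hcoeff m (Nat.zero_le _)
  | succ n ih =>
    intro F hF hcoeff
    have hpderiv (i : σ) : pderiv i F = 0 := by
      refine ih _ ?_ fun m hm ↦ ?_
      · rw [← derivation_aeval_eq_aeval_pderiv (hD i), hF, map_zero]
      · rw [coeff_pderiv, hcoeff _ (by simpa using hm), zero_mul]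
    have hconst := eq_C_of_forall_pderiv_eq_zero hpderiv
    rw [hconst, aeval_C, map_eq_zero_iff _ hinj] at hF
    rw [hconst, hF, C_0]

end DualDerivations

section SymmetricAlgebra

variable {k : Type*} [CommRing k] {M S A : Type*} [AddCommGroup M] [Module k M]
  [CommRing S] [Algebra k S] [CommRing A] [Algebra k A]

theorem isSymmetricAlgebra_of_basis {σ : Type*} {f : M →ₗ[k] A} (b : Module.Basis σ k M)
    (hindep : AlgebraicIndependent k fun i ↦ f (b i))
    (hgen : Algebra.adjoin k (Set.range f) = ⊤) : IsSymmetricAlgebra f := by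
  refine ⟨?_, fun a ↦ ?_⟩
  · have hfactor : SymmetricAlgebra.lift f = (MvPolynomial.aeval fun i ↦ f (b i)).comp
        (SymmetricAlgebra.equivMvPolynomial b : SymmetricAlgebra k M →ₐ[k] MvPolynomial σ k) :=
      SymmetricAlgebra.algHom_ext <| b.ext fun i ↦ by simp
    rw [hfactor, AlgHom.coe_comp]
    exact Function.Injective.comp hindep (SymmetricAlgebra.equivMvPolynomial b).injective
  · have hle : Algebra.adjoin k (Set.range f) ≤ (SymmetricAlgebra.lift f).range :=
      Algebra.adjoin_le <| Set.range_subset_iff.mpr fun x ↦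
        ⟨SymmetricAlgebra.ι k M x, SymmetricAlgebra.lift_ι_apply f x⟩
    exact hle (hgen ▸ Algebra.mem_top)

theorem bijective_of_isSymmetricAlgebra {ι : M →ₗ[k] S} {f : M →ₗ[k] A}
    (hι : IsSymmetricAlgebra ι) (hf : IsSymmetricAlgebra f) {v : S →ₐ[k] A}
    (hv : v.toLinearMap ∘ₗ ι = f) : Function.Bijective v := by
  have hcomp : v.comp (SymmetricAlgebra.lift ι) = SymmetricAlgebra.lift f := by
    refine SymmetricAlgebra.algHom_ext (LinearMap.ext fun x ↦ ?_)
    simp [← hv]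
  refine (Function.Bijective.of_comp_iff v hι).mp ?_
  rw [← AlgHom.coe_comp, hcomp]
  exact hf

universe u

theorem isSymmetricAlgebra_of_existsUnique_lift {k M S : Type u} [CommRing k] [AddCommGroup M]
    [Module k M] [CommRing S] [Algebra k S] {ι : M →ₗ[k] S}
    (huniv : ∀ (C : Type u) [CommRing C] [Algebra k C] (φ : M →ₗ[k] C),
      ∃! g : S →ₐ[k] C, g.toLinearMap ∘ₗ ι = φ) : IsSymmetricAlgebra ι := by
  obtain ⟨g, hg, -⟩ := huniv _ (SymmetricAlgebra.ι k M)
  have hright : (SymmetricAlgebra.lift ι).comp g = AlgHom.id k S := by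
    refine (huniv S ι).unique ?_ rfl
    rw [AlgHom.comp_toLinearMap, LinearMap.comp_assoc, hg]
    exact SymmetricAlgebra.lift_comp_ι ι
  have hleft : g.comp (SymmetricAlgebra.lift ι) = AlgHom.id k (SymmetricAlgebra k M) := by
    refine SymmetricAlgebra.algHom_ext (LinearMap.ext fun x ↦ ?_)
    simpa using LinearMap.congr_fun hg x
  exact (AlgEquiv.ofAlgHom _ _ hright hleft).bijective

end SymmetricAlgebra

section Primitive

open Coalgebra

variable (k A : Type*) [CommRing k] [CommRing A] [Bialgebra k A]

/-- The submodule of primitive elements of a bialgebra, those with `Δ p = p ⊗ 1 + 1 ⊗ p`. -/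
def primitiveElements : Submodule k A :=
  LinearMap.eqLocus (comul (R := k) (A := A)) (Algebra.TensorProduct.includeLeft.toLinearMap +
    Algebra.TensorProduct.includeRight.toLinearMap)

variable {k A}

theorem mem_primitiveElements {p : A} :
    p ∈ primitiveElements k A ↔ comul (R := k) p = p ⊗ₜ[k] 1 + 1 ⊗ₜ[k] p :=
  Iff.rfl

theorem counit_eq_zero_of_mem_primitiveElements {p : A} (hp : p ∈ primitiveElements k A) :
    counit (R := k) p = 0 := by
  have h := Coalgebra.rTensor_counit_comul (R := k) p
  rw [mem_primitiveElements.mp hp] at h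
  simp only [map_add, LinearMap.rTensor_tmul, Bialgebra.counit_one] at h
  simpa using congrArg (counit (R := k) ∘ TensorProduct.lid k A) (add_eq_right.mp h)

/-- The derivation `(id ⊗ δ) ∘ Δ` extending a point derivation `δ` at the counit; on group schemes,
the left-invariant vector field with value `δ` at the identity. -/
noncomputable def leftInvariantDerivation (δ : A →ₗ[k] k)
    (hδ : ∀ a b, δ (a * b) = counit (R := k) a * δ b + counit (R := k) b * δ a) :
    Derivation k A A :=
  .mk' (TensorProduct.rid k A ∘ₗ δ.lTensor A ∘ₗ comul) fun a b ↦ by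
    have hmul (u v : A ⊗[k] A) : TensorProduct.rid k A (δ.lTensor A (u * v)) =
        TensorProduct.rid k A (counit.lTensor A u) * TensorProduct.rid k A (δ.lTensor A v) +
        TensorProduct.rid k A (counit.lTensor A v) * TensorProduct.rid k A (δ.lTensor A u) := by
      induction u using TensorProduct.induction_on with
      | zero => simp
      | add u u' hu hu' => simp only [add_mul, mul_add, map_add, hu, hu']; ring
      | tmul x y =>
        induction v using TensorProduct.induction_on with
        | zero => simp
        | add v v' hv hv' => simp only [add_mul, mul_add, map_add, hv, hv']; ring
        | tmul z w =>
          simp only [Algebra.TensorProduct.tmul_mul_tmul, LinearMap.lTensor_tmul,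
            TensorProduct.rid_tmul, hδ, add_smul, smul_mul_smul_comm]
          rw [mul_comm z x]
    simp [hmul, Bialgebra.comul_mul]

theorem leftInvariantDerivation_apply_of_mem_primitiveElements {δ : A →ₗ[k] k}
    (hδ : ∀ a b, δ (a * b) = counit (R := k) a * δ b + counit (R := k) b * δ a) {p : A}
    (hp : p ∈ primitiveElements k A) : leftInvariantDerivation δ hδ p = algebraMap k A (δ p) := by
  have hone : δ 1 = 0 := by simpa using hδ 1 1
  simp [leftInvariantDerivation, mem_primitiveElements.mp hp, hone,
    Algebra.algebraMap_eq_smul_one]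

end Primitive

section ConvolutionPowers

open Coalgebra WithConv

variable (k : Type*) {A : Type*} [CommRing k] [CommRing A] [Bialgebra k A]

/-- The `n`-th convolution power of the identity (the `n`-th Adams operator); on points of a
commutative group scheme, multiplication by `n`. -/
noncomputable def convPowId (n : ℕ) : A →ₐ[k] A :=
  ofConv (toConv (AlgHom.id k A) ^ n)

theorem convPowId_zero (a : A) : convPowId k 0 a = algebraMap k A (counit a) := by
  simp only [convPowId, pow_zero]
  rfl

theorem convPowId_one (a : A) : convPowId k 1 a = a := by
  simp [convPowId]

theorem convPowId_add (m n : ℕ) {ι : Type*} {a : A} (r : Coalgebra.Repr k a ι) :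
    convPowId k (m + n) a =
      ∑ i ∈ r.index, convPowId k m (r.left i) * convPowId k n (r.right i) := by
  simp only [convPowId, pow_add]
  refine (AlgHom.convMul_apply _ _ a).trans ?_
  rw [← r.eq, map_sum]
  simp

theorem comul_convPowId [IsCocomm k A] (n : ℕ) {ι : Type*} {a : A} (r : Coalgebra.Repr k a ι) :
    comul (R := k) (convPowId k n a) =
      ∑ i ∈ r.index, convPowId k n (r.left i) ⊗ₜ[k] convPowId k n (r.right i) := by
  have hψ : convPowId (A := A) k n = (ofConv (toConv (BialgHom.id k A) ^ n)).toAlgHom :=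
    (congrArg ofConv (BialgHom.toAlgHom_convPow (toConv (BialgHom.id k A)) n)).symm
  rw [hψ]
  refine (CoalgHomClass.map_comp_comul_apply
    (ofConv (toConv (BialgHom.id k A) ^ n)) a).symm.trans ?_
  rw [← r.eq, map_sum]
  rfl

theorem convPowId_of_mem_primitiveElements (n : ℕ) {p : A} (hp : p ∈ primitiveElements k A) :
    convPowId k n p = n • p := by
  induction n with
  | zero => rw [convPowId_zero, counit_eq_zero_of_mem_primitiveElements hp, map_zero, zero_smul]
  | succ n ih =>
    let r : Coalgebra.Repr k p (Fin 2) :=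
      { index := Finset.univ
        left := ![p, 1]
        right := ![1, p]
        eq := by simp [mem_primitiveElements.mp hp] }
    rw [convPowId_add k n 1 r]
    simp [r, ih, convPowId_one, add_mul]

end ConvolutionPowers

section ConvolutionLogarithm

open Coalgebra Polynomial

section CommRing

variable {k A : Type*} [CommRing k] [CommRing A] [Bialgebra k A]

/-- `Φ` interpolates the convolution powers of the identity by polynomials: `Φ a` takes the value
`convPowId k n a` at every natural number `n`. -/
def InterpolatesConvPowId (Φ : A →ₐ[k] A[X]) : Prop :=
  ∀ a (n : ℕ), (Φ a).eval (n : A) = convPowId k n a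

/-- The convolution logarithm of the identity (the first Eulerian idempotent): since the convolution
powers are `exp (n * log id)`, it is the coefficient of `n` in the interpolating polynomial. -/
noncomputable def convLog (Φ : A →ₐ[k] A[X]) : A →ₗ[k] A :=
  (lcoeff A 1).restrictScalars k ∘ₗ Φ.toLinearMap

theorem convLog_apply (Φ : A →ₐ[k] A[X]) (a : A) : convLog Φ a = (Φ a).coeff 1 := rfl

variable {Φ : A →ₐ[k] A[X]} (hΦ : InterpolatesConvPowId Φ)
include hΦ

theorem InterpolatesConvPowId.coeff_zero (a : A) :
    (Φ a).coeff 0 = algebraMap k A (counit a) := by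
  rw [coeff_zero_eq_eval_zero, ← Nat.cast_zero, hΦ, convPowId_zero]

theorem InterpolatesConvPowId.eval_one (a : A) : (Φ a).eval 1 = a := by
  rw [← Nat.cast_one, hΦ, convPowId_one]

theorem InterpolatesConvPowId.convLog_mul (a b : A) :
    convLog Φ (a * b) = counit (R := k) a • convLog Φ b + counit (R := k) b • convLog Φ a := by
  simp only [convLog_apply, map_mul, mul_coeff_one, hΦ.coeff_zero, Algebra.smul_def]
  ring

end CommRing

section Field

variable {k A : Type*} [Field k] [CharZero k] [CommRing A] [Bialgebra k A]
  {Φ : A →ₐ[k] A[X]} (hΦ : InterpolatesConvPowId Φ)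
include hΦ

theorem InterpolatesConvPowId.eq_of_forall {a : A} {p : A[X]}
    (h : ∀ n : ℕ, convPowId k n a = p.eval (n : A)) : Φ a = p :=
  polynomial_eq_of_forall_eval_natCast_eq k fun n ↦ (hΦ a n).trans (h n)

theorem InterpolatesConvPowId.derivative_eq {ι : Type*} {a : A} (r : Coalgebra.Repr k a ι) :
    derivative (Φ a) = ∑ i ∈ r.index, C (convLog Φ (r.left i)) * Φ (r.right i) := by
  have htaylor (n : ℕ) : taylor (n : A) (Φ a) =
      ∑ i ∈ r.index, Φ (r.left i) * C (convPowId k n (r.right i)) := by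
    refine polynomial_eq_of_forall_eval_natCast_eq k fun m ↦ ?_
    rw [taylor_eval, ← Nat.cast_add, hΦ, convPowId_add k m n r]
    simp [eval_finsetSum, hΦ _ m]
  refine polynomial_eq_of_forall_eval_natCast_eq k fun n ↦ ?_
  rw [← taylor_coeff_one, htaylor, finsetSum_coeff, eval_finsetSum]
  simp [convLog_apply, hΦ _ n]

theorem InterpolatesConvPowId.convLog_mem_primitiveElements [IsCocomm k A] (a : A) :
    convLog Φ a ∈ primitiveElements k A := by
  let r := ℛ k a
  let left : A →ₐ[k] A ⊗[k] A := Algebra.TensorProduct.includeLeft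
  let right : A →ₐ[k] A ⊗[k] A := Algebra.TensorProduct.includeRight
  have hcomul : (Φ a).map (Bialgebra.comulAlgHom k A : A →+* A ⊗[k] A) =
      ∑ i ∈ r.index, (Φ (r.left i)).map (left : A →+* A ⊗[k] A) *
        (Φ (r.right i)).map (right : A →+* A ⊗[k] A) := by
    refine polynomial_eq_of_forall_eval_natCast_eq k fun n ↦ ?_
    simp only [eval_natCast_map, eval_finsetSum, eval_mul, hΦ _ n]
    refine (comul_convPowId k n r).trans (Finset.sum_congr rfl fun i _ ↦ ?_)
    simp [left, right]
  have hcoeff := congrArg (coeff · 1) hcomul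
  simp only [coeff_map, finsetSum_coeff, mul_coeff_one, hΦ.coeff_zero] at hcoeff
  have hsum_right : ∑ i ∈ r.index, counit (R := k) (r.left i) • convLog Φ (r.right i) =
      convLog Φ a := by
    simpa only [map_sum, TensorProduct.lid_tmul, one_smul] using congrArg (TensorProduct.lid k A)
      (sum_counit_tmul_map_eq (convLog Φ) a (repr := r))
  have hsum_left : ∑ i ∈ r.index, counit (R := k) (r.right i) • convLog Φ (r.left i) =
      convLog Φ a := by
    simpa only [map_sum, TensorProduct.rid_tmul, one_smul] using congrArg (TensorProduct.rid k A)
      (sum_map_tmul_counit_eq (convLog Φ) a (repr := r))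
  calc comul (R := k) (convLog Φ a)
    _ = ∑ i ∈ r.index, (1 ⊗ₜ[k] (counit (R := k) (r.left i) • convLog Φ (r.right i)) +
          (counit (R := k) (r.right i) • convLog Φ (r.left i)) ⊗ₜ[k] 1) := by
        refine hcoeff.trans (Finset.sum_congr rfl fun i _ ↦ ?_)
        simp only [left, right, convLog_apply, Algebra.algebraMap_eq_smul_one, map_smul, map_one,
          RingHom.coe_coe, Algebra.TensorProduct.includeLeft_apply,
          Algebra.TensorProduct.includeRight_apply, smul_mul_assoc, mul_smul_comm, one_mul, mul_one,
          TensorProduct.tmul_smul, ← TensorProduct.smul_tmul']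
    _ = convLog Φ a ⊗ₜ[k] 1 + 1 ⊗ₜ[k] convLog Φ a := by
        rw [Finset.sum_add_distrib, ← TensorProduct.tmul_sum, ← TensorProduct.sum_tmul,
          hsum_right, hsum_left, add_comm]

theorem InterpolatesConvPowId.apply_of_mem_primitiveElements {p : A}
    (hp : p ∈ primitiveElements k A) : Φ p = C p * X := by
  refine hΦ.eq_of_forall fun n ↦ ?_
  rw [convPowId_of_mem_primitiveElements k n hp, eval_mul, eval_C, eval_X, nsmul_eq_mul, mul_comm]

theorem InterpolatesConvPowId.coeff_mem_adjoin_primitiveElements [IsCocomm k A] (j : ℕ) (a : A) :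
    (Φ a).coeff j ∈ Algebra.adjoin k (primitiveElements k A : Set A) := by
  induction j generalizing a with
  | zero => rw [hΦ.coeff_zero]; exact Subalgebra.algebraMap_mem _ _
  | succ j ih =>
    have hcoeff : (j + 1 : k) • (Φ a).coeff (j + 1) =
        ∑ i ∈ (ℛ k a).index, convLog Φ ((ℛ k a).left i) * (Φ ((ℛ k a).right i)).coeff j := by
      have := congrArg (coeff · j) (hΦ.derivative_eq (ℛ k a))
      simpa [coeff_derivative, Algebra.smul_def, mul_comm] using this
    rw [← Subalgebra.mem_toSubmodule,
      ← Submodule.smul_mem_iff _ (Nat.cast_add_one_ne_zero (R := k) j), hcoeff]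
    exact Subalgebra.sum_mem _ fun i _ ↦ mul_mem
      (Algebra.subset_adjoin (hΦ.convLog_mem_primitiveElements _)) (ih _)

theorem InterpolatesConvPowId.adjoin_primitiveElements [IsCocomm k A] :
    Algebra.adjoin k (primitiveElements k A : Set A) = ⊤ := by
  refine Algebra.eq_top_iff.mpr fun a ↦ ?_
  rw [← hΦ.eval_one a, eval_eq_sum_range]
  simp only [one_pow, mul_one]
  exact Subalgebra.sum_mem _ fun j _ ↦ hΦ.coeff_mem_adjoin_primitiveElements j a

theorem InterpolatesConvPowId.algebraicIndependent_basis {σ : Type*}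
    (b : Module.Basis σ k (primitiveElements k A)) :
    AlgebraicIndependent k fun i ↦ (b i : A) := by
  classical
  choose l hl using fun i ↦ LinearMap.exists_extend (b.coord i)
  have hδ (i : σ) (x y : A) : (l i ∘ₗ convLog Φ) (x * y) =
      counit x * (l i ∘ₗ convLog Φ) y + counit y * (l i ∘ₗ convLog Φ) x := by
    simp [hΦ.convLog_mul]
  refine algebraicIndependent_of_dual_derivations (Bialgebra.algebraMap_injective A) _
    (fun i ↦ leftInvariantDerivation _ (hδ i)) fun i j ↦ ?_
  have hlog : convLog Φ (b j) = (b j : A) := by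
    rw [convLog_apply, hΦ.apply_of_mem_primitiveElements (b j).2, coeff_C_mul, coeff_X_one, mul_one]
  have hcoord : l i (b j) = if j = i then 1 else 0 := by
    simpa [Finsupp.single_apply] using LinearMap.congr_fun (hl i) (b j)
  rw [leftInvariantDerivation_apply_of_mem_primitiveElements _ (b j).2, LinearMap.comp_apply,
    hlog, hcoord, apply_ite (algebraMap k A), map_one, map_zero]

theorem InterpolatesConvPowId.isSymmetricAlgebra [IsCocomm k A] :
    IsSymmetricAlgebra (primitiveElements k A).subtype := by
  refine isSymmetricAlgebra_of_basis (Module.Basis.ofVectorSpace k _)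
    (hΦ.algebraicIndependent_basis _) ?_
  rw [Submodule.coe_subtype, Subtype.range_coe]
  exact hΦ.adjoin_primitiveElements

end Field

end ConvolutionLogarithm

section Points

open Polynomial Algebra.TensorProduct

variable {k A : Type} [Field k] [CommRing A] [Algebra k A]
  {R R' : Type} [CommRing R] [Algebra k R] [CommRing R'] [Algebra k R']

theorem ptOp_apply_of_eq_sum {Δ : A →ₐ[k] A ⊗[k] A} (f g : A →ₐ[k] R) {a : A} {ι : Type*}
    {s : Finset ι} {x y : ι → A} (ha : Δ a = ∑ i ∈ s, x i ⊗ₜ[k] y i) :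
    ptOp k A Δ f g a = ∑ i ∈ s, f (x i) * g (y i) := by
  simp [ptOp, ha]

theorem comp_ptOp (φ : R →ₐ[k] R') (Δ : A →ₐ[k] A ⊗[k] A) (f g : A →ₐ[k] R) :
    φ.comp (ptOp k A Δ f g) = ptOp k A Δ (φ.comp f) (φ.comp g) := by
  have hφ : φ.comp (lmul' k) = (lmul' k).comp (Algebra.TensorProduct.map φ φ) := by
    ext <;> simp
  rw [ptOp, ptOp, ← AlgHom.comp_assoc, hφ, Algebra.TensorProduct.map_comp]
  simp only [AlgHom.comp_assoc]

theorem comp_ptConst (φ : R →ₐ[k] R') (ε : A →ₐ[k] k) :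
    φ.comp (ptConst k A ε) = ptConst k A ε := by
  rw [ptConst, ptConst, ← AlgHom.comp_assoc, Algebra.comp_ofId]

theorem ptConst_self (ε : A →ₐ[k] k) : ptConst k A ε = ε := by
  ext
  simp [ptConst]

theorem ptOp_includeLeft_includeRight (Δ : A →ₐ[k] A ⊗[k] A) :
    ptOp k A Δ includeLeft includeRight = Δ := by
  have hid : (lmul' k (S := A ⊗[k] A)).comp
      (Algebra.TensorProduct.map includeLeft includeRight) = AlgHom.id k (A ⊗[k] A) := by
    ext <;> simp
  rw [ptOp, ← AlgHom.comp_assoc, hid, AlgHom.id_comp]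

theorem comp_eq_ptOp (φ : A ⊗[k] A →ₐ[k] R) (Δ : A →ₐ[k] A ⊗[k] A) :
    φ.comp Δ = ptOp k A Δ (φ.comp includeLeft) (φ.comp includeRight) := by
  rw [← comp_ptOp, ptOp_includeLeft_includeRight]

namespace Biring

variable (B : Biring k A)

/-- The set `A →ₐ[k] R` of `R`-valued points of the affine ring scheme `Spec A`, carrying the
ring structure given by the biring structure on `A`. -/
def Points (_B : Biring k A) (R : Type) [CommRing R] [Algebra k R] : Type :=
  A →ₐ[k] R

instance : FunLike (B.Points R) A R :=
  inferInstanceAs (FunLike (A →ₐ[k] R) A R)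

noncomputable instance : CommRing (B.Points R) :=
  letI : Add (B.Points R) := ⟨ptOp k A B.coadd⟩
  letI : Mul (B.Points R) := ⟨ptOp k A B.comul⟩
  letI : Neg (B.Points R) := ⟨fun f ↦ AlgHom.comp f B.antipode⟩
  letI : Zero (B.Points R) := ⟨ptConst k A B.counitAdd⟩
  letI : One (B.Points R) := ⟨ptConst k A B.counitMul⟩
  CommRing.ofMinimalAxioms (B.pt_add_assoc R) (B.pt_zero_add R)
    (fun f ↦ (B.pt_add_comm R _ _).trans (B.pt_add_neg R f)) (B.pt_mul_assoc R)
    (B.pt_mul_comm R) (B.pt_one_mul R) (B.pt_mul_add R)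

/-- Functoriality of points in the value algebra. -/
noncomputable def Points.map (φ : R →ₐ[k] R') : B.Points R →+* B.Points R' where
  toFun f := AlgHom.comp φ f
  map_one' := comp_ptConst φ _
  map_mul' := comp_ptOp φ _
  map_zero' := comp_ptConst φ _
  map_add' := comp_ptOp φ _

namespace Points

variable {B}

theorem add_apply_of_eq_sum (f g : B.Points R) {ι : Type*} {s : Finset ι} {a : A}
    {x y : ι → A} (ha : B.coadd a = ∑ i ∈ s, x i ⊗ₜ[k] y i) :
    (f + g) a = ∑ i ∈ s, f (x i) * g (y i) :=
  ptOp_apply_of_eq_sum _ _ ha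

theorem mul_apply_of_eq_sum (f g : B.Points R) {ι : Type*} {s : Finset ι} {a : A}
    {x y : ι → A} (ha : B.comul a = ∑ i ∈ s, x i ⊗ₜ[k] y i) :
    (f * g) a = ∑ i ∈ s, f (x i) * g (y i) :=
  ptOp_apply_of_eq_sum _ _ ha

end Points

theorem coadd_coassoc :
    (Algebra.TensorProduct.assoc k k k A A A).toAlgHom.comp
        ((Algebra.TensorProduct.map B.coadd (.id k A)).comp B.coadd) =
      (Algebra.TensorProduct.map (.id k A) B.coadd).comp B.coadd := by
  let first : A →ₐ[k] A ⊗[k] (A ⊗[k] A) := includeLeft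
  let second : A →ₐ[k] A ⊗[k] (A ⊗[k] A) := includeRight.comp includeLeft
  let third : A →ₐ[k] A ⊗[k] (A ⊗[k] A) := includeRight.comp includeRight
  have hleft : (Algebra.TensorProduct.assoc k k k A A A).toAlgHom.comp
      ((Algebra.TensorProduct.map B.coadd (.id k A)).comp B.coadd) =
        ptOp k A B.coadd (ptOp k A B.coadd first second) third := by
    have hinner : ptOp k A B.coadd first second =
        ((Algebra.TensorProduct.assoc k k k A A A).toAlgHom.comp includeLeft).comp B.coadd := by
      rw [comp_eq_ptOp]
      congr 1
    rw [hinner, ← AlgHom.comp_assoc, comp_eq_ptOp]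
    congr 1
    ext
    simp [third, one_def]
  have hright : (Algebra.TensorProduct.map (.id k A) B.coadd).comp B.coadd =
      ptOp k A B.coadd first (ptOp k A B.coadd second third) := by
    have hinner : ptOp k A B.coadd second third = includeRight.comp B.coadd :=
      (comp_eq_ptOp _ _).symm
    rw [hinner, comp_eq_ptOp]
    congr 1
    ext
    simp [first]
  rw [hleft, hright, B.pt_add_assoc]

theorem map_counitAdd_id_comp_coadd :
    (Algebra.TensorProduct.map B.counitAdd (.id k A)).comp B.coadd =
      (Algebra.TensorProduct.lid k A).symm := by
  rw [comp_eq_ptOp, map_comp_includeLeft, map_comp_includeRight, AlgHom.comp_id]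
  exact (B.pt_zero_add _ _).trans (AlgHom.ext fun _ ↦ rfl)

theorem coadd_comm : (Algebra.TensorProduct.comm k A A).toAlgHom.comp B.coadd = B.coadd := by
  rw [comp_eq_ptOp, B.pt_add_comm]
  exact ptOp_includeLeft_includeRight B.coadd

theorem map_id_counitAdd_comp_coadd :
    (Algebra.TensorProduct.map (.id k A) B.counitAdd).comp B.coadd =
      (Algebra.TensorProduct.rid k k A).symm := by
  rw [comp_eq_ptOp, map_comp_includeLeft, map_comp_includeRight, AlgHom.comp_id, B.pt_add_comm]
  have hconst : includeRight.comp B.counitAdd = ptConst k A B.counitAdd (R := A ⊗[k] k) :=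
    AlgHom.ext fun _ ↦ includeRight.commutes _
  rw [hconst, B.pt_zero_add]
  rfl

/-- The bialgebra underlying a biring, with comultiplication `Δ⁺` and counit `ε⁺`. -/
noncomputable abbrev toBialgebra : Bialgebra k A :=
  .ofAlgHom B.coadd B.counitAdd B.coadd_coassoc B.map_counitAdd_id_comp_coadd
    B.map_id_counitAdd_comp_coadd

theorem isCocomm_toBialgebra :
    letI := B.toBialgebra
    Coalgebra.IsCocomm k A :=
  let := B.toBialgebra
  ⟨congrArg AlgHom.toLinearMap B.coadd_comm⟩

theorem primitiveElements_toBialgebra :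
    letI := B.toBialgebra
    primitiveElements k A = primitives k A B :=
  rfl

/-- The generic point `id : A → A`. -/
def genericPoint : B.Points A :=
  AlgHom.id k A

theorem convPowId_eq_nsmul_genericPoint (n : ℕ) :
    letI := B.toBialgebra
    convPowId k n = n • B.genericPoint := by
  let := B.toBialgebra
  induction n with
  | zero => rw [zero_nsmul]; rfl
  | succ n ih => rw [succ_nsmul, ← ih]; rfl

theorem convPowId_eq_sum (n : ℕ) {ι : Type*} {s : Finset ι} {a : A} {x y : ι → A}
    (ha : B.comul a = ∑ i ∈ s, x i ⊗ₜ[k] y i) :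
    letI := B.toBialgebra
    convPowId k n a = ∑ i ∈ s, x i * algebraMap k A ((n : B.Points k) (y i)) := by
  have hmul : n • B.genericPoint =
      B.genericPoint * Points.map B (Algebra.ofId k A) (n : B.Points k) := by
    rw [map_natCast, nsmul_eq_mul, mul_comm]
  rw [convPowId_eq_nsmul_genericPoint, hmul]
  exact Points.mul_apply_of_eq_sum _ _ ha

namespace Points

variable {B}

theorem exists_finiteDimensional_affine_comp_mem (β : ℚ →+* B.Points k) (c : A) :
    ∃ V : Submodule k (ℚ → k), FiniteDimensional k V ∧
      ∀ s t : ℚ, (fun q ↦ β (s * q + t) c) ∈ V := by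
  obtain ⟨n, u, v, hc⟩ := TensorProduct.exists_sum_tmul_eq (B.coadd c)
  choose m x y hu using fun i ↦ TensorProduct.exists_sum_tmul_eq (B.comul (u i))
  let w (ij : Σ i, Fin (m i)) (q : ℚ) : k := β q (y ij.1 ij.2)
  refine ⟨Submodule.span k (Set.range w), .span_of_finite k (Set.finite_range w), fun s t ↦ ?_⟩
  have hexpand : (fun q ↦ β (s * q + t) c) =
      ∑ i, ∑ j, (β t (v i) * β s (x i j)) • w ⟨i, j⟩ := by
    ext q
    simp only [map_add, map_mul, add_apply_of_eq_sum _ _ hc, mul_apply_of_eq_sum _ _ (hu _),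
      Finset.sum_apply, Pi.smul_apply, smul_eq_mul, Finset.sum_mul, w]
    exact Finset.sum_congr rfl fun i _ ↦ Finset.sum_congr rfl fun j _ ↦ by ring
  rw [hexpand]
  exact sum_mem fun i _ ↦ sum_mem fun j _ ↦
    Submodule.smul_mem _ _ (Submodule.subset_span ⟨⟨i, j⟩, rfl⟩)

theorem exists_polynomial_eval_natCast_eq [CharZero k] (β : ℚ →+* B.Points k) (c : A) :
    ∃ p : k[X], ∀ n : ℕ, p.eval (n : k) = (n : B.Points k) c := by
  obtain ⟨V, _, hV⟩ := exists_finiteDimensional_affine_comp_mem β c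
  simpa only [map_natCast] using
    exists_polynomial_eval_natCast_eq_of_affine_comp_mem (f := (β · c)) hV

end Points

theorem exists_interpolatesConvPowId [CharZero k] (β : ℚ →+* B.Points k) :
    letI := B.toBialgebra
    ∃ Φ : A →ₐ[k] A[X], InterpolatesConvPowId Φ := by
  let := B.toBialgebra
  refine exists_algHom_eval_natCast_eq _ fun a ↦ ?_
  obtain ⟨m, x, y, ha⟩ := TensorProduct.exists_sum_tmul_eq (B.comul a)
  choose p hp using fun i ↦ Points.exists_polynomial_eval_natCast_eq β (y i)
  refine ⟨∑ i, C (x i) * (p i).map (algebraMap k A), fun n ↦ ?_⟩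
  simp only [B.convPowId_eq_sum n ha, eval_finsetSum, eval_mul, eval_C, eval_natCast_map, hp]

end Biring

/-- The structure map `k → A(k)` of an affine `k`-algebra scheme, as a ring homomorphism. -/
noncomputable def Bibiring.betaRingHom (B : Bibiring k A) : k →+* B.toBiring.Points k where
  toFun := B.beta
  map_zero' := B.beta_zero.trans (ptConst_self _).symm
  map_one' := B.beta_one.trans (ptConst_self _).symm
  map_add' := B.beta_add
  map_mul' := B.beta_mul

end Points

theorem biring_char_zero_symmetric_on_primitives_general
    (k A : Type) [Field k] [CharZero k] [CommRing A] [Algebra k A]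
    (B : Biring k A) (β : ℚ →+* B.Points k) :
    IsSymmetricAlgebra (primitives k A B).subtype := by
  let := B.toBialgebra
  have := B.isCocomm_toBialgebra
  obtain ⟨Φ, hΦ⟩ := B.exists_interpolatesConvPowId β
  rw [← B.primitiveElements_toBialgebra]
  exact hΦ.isSymmetricAlgebra

/-- **Theorem 4.5** (underlying-algebra content): every plethory over a field of
characteristic zero is linear.  For a `k`-`k`-biring `A` over a field `k` of characteristic
zero with submodule of primitives `P`, the canonical `k`-algebra homomorphism
`Sym_k(P) → A` extending the inclusion `P ↪ A` is bijective; here `Sym_k(P)` is any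
commutative `k`-algebra `S` with a linear map `ι : P → S` satisfying the universal property
of the symmetric algebra.  In particular `A` is a polynomial algebra on any `k`-basis
of `P`. -/
theorem biring_char_zero_symmetric_on_primitives
    (k A : Type) [Field k] [CharZero k] [CommRing A] [Algebra k A]
    (B : Bibiring k A)
    (S : Type) [CommRing S] [Algebra k S]
    (ι : primitives k A B.toBiring →ₗ[k] S)
    (huniv : ∀ (C : Type) [CommRing C] [Algebra k C]
      (φ : primitives k A B.toBiring →ₗ[k] C),
      ∃! g : S →ₐ[k] C, g.toLinearMap ∘ₗ ι = φ)
    (v : S →ₐ[k] A)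
    (hv : v.toLinearMap ∘ₗ ι = (primitives k A B.toBiring).subtype) :
    Function.Bijective v := by
  have hA := biring_char_zero_symmetric_on_primitives_general k A B.toBiring
    (B.betaRingHom.comp (algebraMap ℚ k))
  exact bijective_of_isSymmetricAlgebra (isSymmetricAlgebra_of_existsUnique_lift huniv) hA hv
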